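/- Consider the inverted pendulum cart on a planar roller coaster: configuration variables (x¹,x²) = (φ,s), mass matrix g₁₁ = 1, g₁₂ = g₂₁ = b sin(α(s) − φ), g₂₂ = 1, where α : ℝ → ℝ is smooth and 0 < b < 1 (this is the case sin²α = n₃²). Let U ⊆ {(φ,s) : cos(α(s) − φ) ≠ 0} be open. A smooth λ = (λ¹,λ²) : U → ℝ² satisfies the λ-equations ∂(g_{1i}λ^i)/∂x^k − 2[k1,i]λ^i = 0 (k = 1,2) if and only if the function ν := λ¹ + b sin(α(s) − φ)λ² satisfies ∂ν/∂s = 0 and λ² = −(∂ν/∂φ)/(2b cos(α(s) − φ)); in that case λ¹ = ν + (1/2) tan(α(s) − φ) ∂ν/∂φ. -/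

import Mathlib

/-- Partial derivative in the `k`-th coordinate direction. -/
noncomputable def pd {n : ℕ} (k : Fin n) (f : (Fin n → ℝ) → ℝ) (x : Fin n → ℝ) : ℝ :=
  fderiv ℝ f x (Pi.single k 1)

/-- Christoffel symbol of the first kind `[ij,k]` of the matrix-valued map `g`. -/
noncomputable def chr {n : ℕ} (g : (Fin n → ℝ) → Matrix (Fin n) (Fin n) ℝ)
    (i j k : Fin n) (x : Fin n → ℝ) : ℝ :=
  (1/2) * (pd i (fun y => g y j k) x + pd j (fun y => g y i k) x - pd k (fun y => g y i j) x)

/-- Mass matrix of the inverted pendulum cart on a planar roller coaster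
(the case `sin²α = n₃²`); coordinates `(x¹, x²) = (φ, s)`. -/
noncomputable def gCoaster (b : ℝ) (α : ℝ → ℝ) (x : Fin 2 → ℝ) : Matrix (Fin 2) (Fin 2) ℝ :=
  !![1, b * Real.sin (α (x 1) - x 0);
     b * Real.sin (α (x 1) - x 0), 1]

/-- `ν = λ¹ + b sin(α(s) − φ) λ²` for the planar roller coaster. -/
noncomputable def nuCoaster (b : ℝ) (α : ℝ → ℝ) (lam : (Fin 2 → ℝ) → Fin 2 → ℝ)
    (x : Fin 2 → ℝ) : ℝ :=
  lam x 0 + b * Real.sin (α (x 1) - x 0) * lam x 1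

/-!
For a symmetric mass matrix `g` on `ℝ²` with constant diagonal, the only Christoffel symbol
`[k1,i]` that survives is `[11,2] = ∂g₁₂/∂x¹`. With `ν = g₁ᵢλⁱ` the λ-equations therefore reduce to
`∂ν/∂x¹ = 2 (∂g₁₂/∂x¹) λ²` and `∂ν/∂x² = 0`. For the coaster `∂g₁₂/∂φ = -b cos (α(s) - φ)`, and
where this does not vanish the first equation can be solved for `λ²`; then `λ¹ = ν - g₁₂λ²`.
-/

open Matrix

section LambdaEquations

variable {n : ℕ} {g : (Fin n → ℝ) → Matrix (Fin n) (Fin n) ℝ}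

/-- The λ-equations at the point `x`, for the mass matrix `g` and the single unactuated
coordinate `a`. The contraction `g_{ai}λ^i` is written as the `a`-th entry of `g *ᵥ lam`. -/
def LambdaEquationsAt (g : (Fin n → ℝ) → Matrix (Fin n) (Fin n) ℝ) (a : Fin n)
    (lam : (Fin n → ℝ) → Fin n → ℝ) (x : Fin n → ℝ) : Prop :=
  ∀ k, pd k (fun y => (g y *ᵥ lam y) a) x - 2 * ∑ i, chr g k a i x * lam x i = 0

lemma pd_const (k : Fin n) (c : ℝ) (x : Fin n → ℝ) : pd k (fun _ => c) x = 0 := by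
  simp [pd]

lemma chr_self_left (a i : Fin n) (x : Fin n → ℝ) :
    chr g a a i x = pd a (fun y => g y a i) x - 1 / 2 * pd i (fun y => g y a a) x := by
  rw [chr]
  ring

lemma chr_self_right (k a : Fin n) (x : Fin n → ℝ) :
    chr g k a a x = 1 / 2 * pd k (fun y => g y a a) x := by
  rw [chr, add_sub_cancel_right]

lemma chr_outer_self (hg : ∀ y, (g y).IsSymm) (k a : Fin n) (x : Fin n → ℝ) :
    chr g k a k x = 1 / 2 * pd a (fun y => g y k k) x := by
  simp only [chr, (hg _).apply a k, add_sub_cancel_left]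

lemma lambdaEquationsAt_iff_of_const_diag {g : (Fin 2 → ℝ) → Matrix (Fin 2) (Fin 2) ℝ}
    {c : Fin 2 → ℝ} (hg : ∀ y, (g y).IsSymm) (hdiag : ∀ y i, g y i i = c i)
    (lam : (Fin 2 → ℝ) → Fin 2 → ℝ) (x : Fin 2 → ℝ) :
    LambdaEquationsAt g 0 lam x ↔
      pd 0 (fun y => (g y *ᵥ lam y) 0) x = 2 * pd 0 (fun y => g y 0 1) x * lam x 1 ∧
        pd 1 (fun y => (g y *ᵥ lam y) 0) x = 0 := by
  have hchr000 : chr g 0 0 0 x = 0 := by simp only [chr_self_right, hdiag, pd_const, mul_zero]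
  have hchr001 : chr g 0 0 1 x = pd 0 (fun y => g y 0 1) x := by
    simp only [chr_self_left, hdiag, pd_const, mul_zero, sub_zero]
  have hchr100 : chr g 1 0 0 x = 0 := by simp only [chr_self_right, hdiag, pd_const, mul_zero]
  have hchr101 : chr g 1 0 1 x = 0 := by simp only [chr_outer_self hg, hdiag, pd_const, mul_zero]
  simp only [LambdaEquationsAt, Fin.forall_fin_two, Fin.sum_univ_two, hchr000, hchr001, hchr100,
    hchr101, zero_mul, zero_add, mul_zero, sub_eq_zero, mul_assoc]

end LambdaEquations

section Coaster

variable {b : ℝ} {α : ℝ → ℝ} {lam : (Fin 2 → ℝ) → Fin 2 → ℝ} {x : Fin 2 → ℝ}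

lemma gCoaster_isSymm (y : Fin 2 → ℝ) : (gCoaster b α y).IsSymm :=
  IsSymm.ext_iff.2 (by simp [gCoaster])

lemma gCoaster_diag (y : Fin 2 → ℝ) (i : Fin 2) : gCoaster b α y i i = 1 := by
  fin_cases i <;> rfl

lemma gCoaster_mulVec_zero (y : Fin 2 → ℝ) :
    (gCoaster b α y *ᵥ lam y) 0 = nuCoaster b α lam y := by
  simp [gCoaster, nuCoaster, mulVec, dotProduct, Fin.sum_univ_two]

lemma pd_zero_gCoaster_zero_one (hα : DifferentiableAt ℝ α (x 1)) :
    pd 0 (fun y => gCoaster b α y 0 1) x = -(b * Real.cos (α (x 1) - x 0)) := by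
  have hφ : HasFDerivAt (fun y : Fin 2 → ℝ => y 0) (.proj (R := ℝ) 0) x := hasFDerivAt_apply 0 x
  have hs : HasFDerivAt (fun y : Fin 2 → ℝ => y 1) (.proj (R := ℝ) 1) x := hasFDerivAt_apply 1 x
  have hsin := ((hα.hasDerivAt.comp_hasFDerivAt x hs).sub hφ).sin.const_mul b
  refine (congrArg (· (Pi.single 0 1)) hsin.fderiv).trans ?_
  simp

lemma differentiableAt_nuCoaster (hα : DifferentiableAt ℝ α (x 1))
    (hlam : ∀ i, DifferentiableAt ℝ (fun y => lam y i) x) :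
    DifferentiableAt ℝ (nuCoaster b α lam) x := by
  have hαs : DifferentiableAt ℝ (fun y : Fin 2 → ℝ => α (y 1)) x :=
    hα.comp x (differentiableAt_apply 1 x)
  have hsin := (hαs.sub (differentiableAt_apply 0 x)).sin.const_mul b
  exact (hlam 0).add (hsin.mul (hlam 1))

lemma lambdaEquationsAt_gCoaster_iff (hb : b ≠ 0) (hα : DifferentiableAt ℝ α (x 1))
    (hcos : Real.cos (α (x 1) - x 0) ≠ 0) :
    LambdaEquationsAt (gCoaster b α) 0 lam x ↔
      pd 1 (nuCoaster b α lam) x = 0 ∧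
        lam x 1 = -(pd 0 (nuCoaster b α lam) x) / (2 * b * Real.cos (α (x 1) - x 0)) := by
  have hden : 2 * b * Real.cos (α (x 1) - x 0) ≠ 0 := mul_ne_zero (mul_ne_zero two_ne_zero hb) hcos
  rw [lambdaEquationsAt_iff_of_const_diag gCoaster_isSymm gCoaster_diag, and_comm,
    pd_zero_gCoaster_zero_one hα, eq_div_iff hden]
  simp only [gCoaster_mulVec_zero]
  refine and_congr_right' ⟨fun h => ?_, fun h => ?_⟩ <;> linarith

lemma lam_zero_eq_nuCoaster_add_tan_mul (hb : b ≠ 0) {d : ℝ}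
    (h : lam x 1 = -d / (2 * b * Real.cos (α (x 1) - x 0))) :
    lam x 0 = nuCoaster b α lam x + (1 / 2) * Real.tan (α (x 1) - x 0) * d := by
  rw [nuCoaster, h, Real.tan_eq_sin_div_cos]
  field_simp
  ring

theorem planar_coaster_lambda_characterization_general (hb : b ≠ 0)
    (hα : DifferentiableAt ℝ α (x 1)) (hcos : Real.cos (α (x 1) - x 0) ≠ 0)
    (_hν : DifferentiableAt ℝ (nuCoaster b α lam) x) :
    (LambdaEquationsAt (gCoaster b α) 0 lam x ↔
      pd 1 (nuCoaster b α lam) x = 0 ∧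
        lam x 1 = -(pd 0 (nuCoaster b α lam) x) / (2 * b * Real.cos (α (x 1) - x 0))) ∧
    (LambdaEquationsAt (gCoaster b α) 0 lam x →
      lam x 0 = nuCoaster b α lam x
        + (1 / 2) * Real.tan (α (x 1) - x 0) * pd 0 (nuCoaster b α lam) x) :=
  have hiff := lambdaEquationsAt_gCoaster_iff hb hα hcos
  ⟨hiff, fun h => lam_zero_eq_nuCoaster_add_tan_mul hb (hiff.1 h).2⟩

end Coaster

/-- Characterization of the solutions of the λ-equations for the inverted
pendulum cart on a planar roller coaster (Case 1, `sin²α = n₃²`). -/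
theorem planar_coaster_lambda_characterization
    (b : ℝ) (hb0 : 0 < b) (hb1 : b < 1)
    (α : ℝ → ℝ) (hα : ContDiff ℝ (⊤ : ℕ∞) α)
    (U : Set (Fin 2 → ℝ)) (hUopen : IsOpen U)
    (hU : U ⊆ {x : Fin 2 → ℝ | Real.cos (α (x 1) - x 0) ≠ 0})
    (lam : (Fin 2 → ℝ) → Fin 2 → ℝ)
    (hlam : ∀ i, ContDiffOn ℝ (⊤ : ℕ∞) (fun x => lam x i) U) :
    -- λ satisfies the λ-equations iff ∂ν/∂s = 0 and the formula for λ²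
    ((∀ x ∈ U, ∀ k : Fin 2,
        pd k (fun y => ∑ i, gCoaster b α y 0 i * lam y i) x
          - 2 * ∑ i, chr (gCoaster b α) k 0 i x * lam x i = 0)
      ↔
      (∀ x ∈ U,
        pd 1 (nuCoaster b α lam) x = 0 ∧
        lam x 1 = -(pd 0 (nuCoaster b α lam) x) / (2 * b * Real.cos (α (x 1) - x 0)))) ∧
    -- in that case λ¹ = ν + (1/2) tan(α − φ) ∂ν/∂φ
    ((∀ x ∈ U, ∀ k : Fin 2,
        pd k (fun y => ∑ i, gCoaster b α y 0 i * lam y i) x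
          - 2 * ∑ i, chr (gCoaster b α) k 0 i x * lam x i = 0) →
      ∀ x ∈ U, lam x 0 = nuCoaster b α lam x
          + (1/2) * Real.tan (α (x 1) - x 0) * pd 0 (nuCoaster b α lam) x) := by
  have general (x) (hx : x ∈ U) :=
    have hαx := hα.differentiable (by simp) (x 1)
    have hlamx i := ((hlam i).contDiffAt (hUopen.mem_nhds hx)).differentiableAt (by simp)
    planar_coaster_lambda_characterization_general hb0.ne' hαx (hU hx)
      (differentiableAt_nuCoaster hαx hlamx)
  exact ⟨forall₂_congr fun x hx => (general x hx).1, fun h x hx => (general x hx).2 (h x hx)⟩
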